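/- arXiv:1304.0936 — 5 statements merged into one kernel-verified Lean document; each statement's English description precedes it below -/
import Mathlib

section
/- Let n, s, r be natural numbers, let w₁,…,wₛ be elements of the free group Fₙ on n generators whose abelianizations w̄₁,…,w̄ₛ ∈ ℤⁿ are linearly independent, and let H := Fₙ / N be the quotient of Fₙ by the normal closure N of {w₁,…,wₛ}. Suppose h₁,…,h_r ∈ H are such that for all integers c₁,…,c_r not all zero, the element c₁·h̄₁ + ⋯ + c_r·h̄_r of the abelianization of H is not torsion, where h̄ denotes the image of h in the abelianization. Then h₁,…,h_r form a basis of a free subgroup of H of rank r; that is, the group homomorphism F_r →* H from the free group on r generators sending the i-th generator to hᵢ is injective. -/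
/-- The abelianization map `Fₙ → ℤⁿ` (written multiplicatively). -/
def freeAbelianization (n : ℕ) : FreeGroup (Fin n) →* Multiplicative (Fin n → ℤ) :=
  FreeGroup.lift fun i => Multiplicative.ofAdd (Pi.single i 1)

/-- `w̄ ∈ ℤⁿ`, the abelianization of a word `w ∈ Fₙ`. -/
def wordBar {n : ℕ} (w : FreeGroup (Fin n)) : Fin n → ℤ :=
  Multiplicative.toAdd (freeAbelianization n w)

theorem hlp_zpow_sum {C ι : Type*} [CommGroup C] (a : C) (S : Finset ι) (f : ι → ℤ) :
    ∏ i ∈ S, a ^ f i = a ^ ∑ i ∈ S, f i := by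
  classical
  induction S using Finset.induction_on with
  | empty => simp
  | insert i S hi ih => rw [Finset.prod_insert hi, Finset.sum_insert hi, ih, zpow_add]

/-- In a commutative group, evaluating a word depends only on its abelianization. -/
theorem hlp_comm_eval {n : ℕ} {C : Type*} [CommGroup C] (q : FreeGroup (Fin n) →* C)
    (g : FreeGroup (Fin n)) :
    q g = ∏ j, q (FreeGroup.of j) ^ (wordBar g j) := by
  induction g using FreeGroup.induction_on with
  | C1 => simp [wordBar]
  | of i =>
    simp only [wordBar, freeAbelianization, FreeGroup.lift_apply_of, toAdd_ofAdd]
    rw [Finset.prod_eq_single i]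
    · simp
    · intro b _ hb
      simp [Pi.single_apply, hb]
    · simp
  | inv_of i ih =>
    have : wordBar (FreeGroup.of i)⁻¹ = - wordBar (FreeGroup.of i) := by simp [wordBar]
    change q (FreeGroup.of i)⁻¹ = _
    change q (FreeGroup.of i) = _ at ih
    rw [map_inv, ih]
    conv_rhs => rw [this]
    simp
  | mul x y hx hy =>
    have : wordBar (x * y) = wordBar x + wordBar y := by simp [wordBar]
    rw [this, map_mul, hx, hy, ← Finset.prod_mul_distrib]
    simp [zpow_add]

theorem hlp_central {n : ℕ} {G : Type*} [Group G] (x : Fin n → G)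
    (z : Fin n → Subgroup.center G) (g : FreeGroup (Fin n)) :
    FreeGroup.lift (fun j => x j * (z j : G)) g =
      FreeGroup.lift x g * (FreeGroup.lift z g : Subgroup.center G) := by
  induction g using FreeGroup.induction_on with
  | C1 => simp
  | of i => simp
  | inv_of i ih =>
    change FreeGroup.lift (fun j => x j * (z j : G)) (FreeGroup.of i)⁻¹ =
      FreeGroup.lift x (FreeGroup.of i)⁻¹ *
        ((FreeGroup.lift z (FreeGroup.of i)⁻¹ : Subgroup.center G) : G)
    have := Subgroup.mem_center_iff.1 ((z i)⁻¹).2 (x i)⁻¹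
    simp only [map_inv, FreeGroup.lift_apply_of, mul_inv_rev]
    simpa using this.symm
  | mul a b ha hb =>
    have := Subgroup.mem_center_iff.1 (FreeGroup.lift z a).2 (FreeGroup.lift x b)
    simp only [map_mul, ha, hb, Subgroup.coe_mul]
    rw [mul_assoc, ← mul_assoc _ (FreeGroup.lift x b), ← this]
    simp only [mul_assoc]

theorem hlp_comm_det {n : ℕ} {C : Type*} [CommGroup C] (u : Fin n → FreeGroup (Fin n))
    (z : Fin n → C) (h1 : ∀ i, FreeGroup.lift z (u i) = 1) :
    ∀ k, z k ^ (Matrix.of fun i => wordBar (u i)).det = 1 := by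
  intro k
  set A := Matrix.of fun i => wordBar (u i) with hA
  have h3 : ∏ i, (FreeGroup.lift z (u i)) ^ (A.adjugate k i) = 1 := by simp [h1]
  rw [← h3]
  have h4 : ∀ i, FreeGroup.lift z (u i) = ∏ j, z j ^ (A i j) := by
    intro i
    rw [hlp_comm_eval]; simp [hA]
  simp only [h4, ← Finset.prod_zpow]
  rw [Finset.prod_comm]
  have h5 : ∀ j, ∏ i, (z j ^ A i j) ^ A.adjugate k i = z j ^ ((A.adjugate * A) k j) := by
    intro j
    rw [Matrix.mul_apply, ← hlp_zpow_sum]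
    refine Finset.prod_congr rfl fun i _ => ?_
    rw [← zpow_mul, mul_comm]
  simp only [h5, Matrix.adjugate_mul]
  rw [Finset.prod_eq_single k]
  · simp
  · intro b _ hb
    simp [Matrix.one_apply, hb.symm]
  · simp

/-- Nonsingular systems have at most one solution in finite nilpotent groups of order coprime to
the determinant. -/
theorem hlp_inj {n : ℕ} (u : Fin n → FreeGroup (Fin n))
    (G : Type*) [Group G] [Group.IsNilpotent G] :
    Finite G → IsCoprime (Nat.card G : ℤ) (Matrix.of fun i => wordBar (u i)).det →
    ∀ x y : Fin n → G, (∀ i, FreeGroup.lift x (u i) = FreeGroup.lift y (u i)) → x = y := by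
  refine Group.nilpotent_center_quotient_ind (P := fun G _ _ => Finite G →
    IsCoprime (Nat.card G : ℤ) (Matrix.of fun i => wordBar (u i)).det →
    ∀ x y : Fin n → G, (∀ i, FreeGroup.lift x (u i) = FreeGroup.lift y (u i)) → x = y) G ?_ ?_
  · intro G _ _ _ _ x y _
    exact Subsingleton.elim _ _
  · intro G _ _ ih _ hco x y hxy
    let π := QuotientGroup.mk' (Subgroup.center G)
    have key : (fun j => π (x j)) = fun j => π (y j) := by
      refine ih inferInstance ?_ _ _ ?_
      · refine hco.of_isCoprime_of_dvd_left ?_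
        exact_mod_cast Subgroup.card_quotient_dvd_card _
      · intro i
        have e : ∀ x : Fin n → G, ∀ g, FreeGroup.lift (fun j => π (x j)) g
            = π (FreeGroup.lift x g) := by
          intro x g
          have : FreeGroup.lift (fun j => π (x j)) = π.comp (FreeGroup.lift x) := by
            ext; simp
          rw [this]; rfl
        rw [e, e, hxy]
    have hz : ∀ j, (x j)⁻¹ * y j ∈ Subgroup.center G := fun j =>
      QuotientGroup.eq.1 (congrFun key j)
    let z : Fin n → Subgroup.center G := fun j => ⟨_, hz j⟩
    have hy : y = fun j => x j * (z j : G) := by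
      funext j; simp [z]
    have h1 : ∀ i, FreeGroup.lift z (u i) = 1 := by
      intro i
      have := hxy i
      rw [hy, hlp_central] at this
      exact Subtype.ext (mul_eq_left.1 this.symm)
    have h2 : ∀ k, z k ^ (Matrix.of fun i => wordBar (u i)).det = 1 :=
      @hlp_comm_det n (Subgroup.center G) IsMulCommutative.instCommGroup u z h1
    have h6 : ∀ k, z k = 1 := by
      intro k
      obtain ⟨a, b, hab⟩ := hco
      have hc : z k ^ (Nat.card G : ℤ) = 1 := by
        rw [zpow_natCast]
        exact Subtype.ext (by simp)
      calc z k = z k ^ (1 : ℤ) := by simp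
        _ = 1 := by
          rw [← hab, zpow_add, mul_comm a, mul_comm b, zpow_mul, zpow_mul, hc, h2]; simp
    rw [hy]
    funext j
    simp [h6]

theorem hlp_surj {n : ℕ} (u : Fin n → FreeGroup (Fin n))
    (G : Type*) [Group G] [Group.IsNilpotent G] [Finite G]
    (hco : IsCoprime (Nat.card G : ℤ) (Matrix.of fun i => wordBar (u i)).det)
    (g : Fin n → G) : ∃ x : Fin n → G, ∀ i, FreeGroup.lift x (u i) = g i := by
  have : Function.Injective (fun (x : Fin n → G) i => FreeGroup.lift x (u i)) := by
    intro x y hxy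
    exact hlp_inj u G inferInstance hco x y (fun i => congrFun hxy i)
  obtain ⟨x, hx⟩ := (Finite.injective_iff_surjective.1 this) g
  exact ⟨x, fun i => congrFun hx i⟩

/-- Syllable form. -/
theorem hlp_syll {α : Type*} (v : FreeGroup α) :
    ∃ L : List (α × ℤ), L.IsChain (fun a b => a.1 ≠ b.1) ∧ (∀ a ∈ L, a.2 ≠ 0) ∧
      v = (L.map fun a => FreeGroup.of a.1 ^ a.2).prod := by
  classical
  have step : ∀ (i : α) (e : ℤ), e ≠ 0 → ∀ v : FreeGroup α,
    (∃ L : List (α × ℤ), L.IsChain (fun a b => a.1 ≠ b.1) ∧ (∀ a ∈ L, a.2 ≠ 0) ∧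
      v = (L.map fun a => FreeGroup.of a.1 ^ a.2).prod) →
    (∃ L : List (α × ℤ), L.IsChain (fun a b => a.1 ≠ b.1) ∧ (∀ a ∈ L, a.2 ≠ 0) ∧
      FreeGroup.of i ^ e * v = (L.map fun a => FreeGroup.of a.1 ^ a.2).prod) := by
    rintro i e he v ⟨L, h1, h2, rfl⟩
    rcases L with _ | ⟨⟨j, f⟩, L⟩
    · exact ⟨[(i, e)], by simp, by simpa using he, by simp⟩
    · by_cases hij : i = j
      · subst hij
        by_cases hef : e + f = 0
        · refine ⟨L, h1.of_cons, fun a ha => h2 a (by simp [ha]), ?_⟩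
          simp [← mul_assoc, ← zpow_add, hef]
        · refine ⟨(i, e + f) :: L, ?_, ?_, ?_⟩
          · rw [List.isChain_cons] at h1 ⊢
            exact h1
          · intro a ha
            rcases List.mem_cons.1 ha with rfl | ha
            · exact hef
            · exact h2 a (by simp [ha])
          · simp [← mul_assoc, ← zpow_add]
      · refine ⟨(i, e) :: (j, f) :: L, ?_, ?_, by simp⟩
        · rw [List.isChain_cons_cons]
          exact ⟨hij, h1⟩
        · intro a ha
          rcases List.mem_cons.1 ha with rfl | ha
          · exact he
          · exact h2 a ha
  have : ∀ v : FreeGroup α, ∀ v', (∃ L : List (α × ℤ), L.IsChain (fun a b => a.1 ≠ b.1) ∧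
      (∀ a ∈ L, a.2 ≠ 0) ∧ v' = (L.map fun a => FreeGroup.of a.1 ^ a.2).prod) →
    (∃ L : List (α × ℤ), L.IsChain (fun a b => a.1 ≠ b.1) ∧ (∀ a ∈ L, a.2 ≠ 0) ∧
      v * v' = (L.map fun a => FreeGroup.of a.1 ^ a.2).prod) := by
    intro v
    induction v using FreeGroup.induction_on with
    | C1 => intro v' h; simpa using h
    | of i => intro v' h; simpa using step i 1 (by simp) v' h
    | inv_of i ih =>
      intro v' h
      have := step i (-1) (by simp) v' h
      rw [zpow_neg_one] at this
      exact this
    | mul a b ha hb =>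
      intro v' h
      rw [mul_assoc]
      exact ha _ (hb _ h)
  simpa using this v 1 ⟨[], by simp, by simp, by simp⟩

/-- Matrices supported on or above the `d`-th superdiagonal. -/
def HlpUp {k p : ℕ} (d : ℕ) (M : Matrix (Fin k) (Fin k) (ZMod p)) : Prop :=
  ∀ a b : Fin k, (b : ℕ) < a + d → M a b = 0

theorem HlpUp.mul {k p c d : ℕ} {M N : Matrix (Fin k) (Fin k) (ZMod p)}
    (hM : HlpUp c M) (hN : HlpUp d N) : HlpUp (c + d) (M * N) := by
  intro a b hab
  rw [Matrix.mul_apply]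
  refine Finset.sum_eq_zero fun j _ => ?_
  by_cases h : (j : ℕ) < a + c
  · rw [hM a j h, zero_mul]
  · rw [hN j b (by omega), mul_zero]

theorem HlpUp.add {k p d : ℕ} {M N : Matrix (Fin k) (Fin k) (ZMod p)}
    (hM : HlpUp d M) (hN : HlpUp d N) : HlpUp d (M + N) := by
  intro a b hab
  simp [hM a b hab, hN a b hab]

theorem HlpUp.mono {k p c d : ℕ} {M : Matrix (Fin k) (Fin k) (ZMod p)}
    (hM : HlpUp d M) (h : c ≤ d) : HlpUp c M := fun a b hab => hM a b (by omega)

theorem HlpUp.pow {k p : ℕ} {M : Matrix (Fin k) (Fin k) (ZMod p)}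
    (hM : HlpUp 1 M) (m : ℕ) : HlpUp m (M ^ m) := by
  induction m with
  | zero =>
    intro a b hab
    have : a ≠ b := by rintro rfl; omega
    simp [this]
  | succ m ih => rw [pow_succ]; exact ih.mul hM

theorem HlpUp.eq_zero {k p d : ℕ} {M : Matrix (Fin k) (Fin k) (ZMod p)}
    (hM : HlpUp d M) (h : k ≤ d) : M = 0 := by
  ext a b
  exact hM a b (by omega)

/-- Unitriangular submonoid. -/
def hlpMon (k p : ℕ) : Submonoid (Matrix (Fin k) (Fin k) (ZMod p))ˣ where
  carrier := {g | HlpUp 1 ((g : Matrix (Fin k) (Fin k) (ZMod p)) - 1)}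
  one_mem' := by intro a b _; simp
  mul_mem' := by
    intro g h hg hh
    have : ((g * h : (Matrix (Fin k) (Fin k) (ZMod p))ˣ) : Matrix (Fin k) (Fin k) (ZMod p)) - 1
        = ((g : Matrix (Fin k) (Fin k) (ZMod p)) - 1) * ((h : Matrix (Fin k) (Fin k) (ZMod p)) - 1)
          + (((g : Matrix (Fin k) (Fin k) (ZMod p)) - 1) +
            ((h : Matrix (Fin k) (Fin k) (ZMod p)) - 1)) := by
      rw [Units.val_mul]; noncomm_ring
    change HlpUp 1 _
    rw [this]
    exact ((HlpUp.mul hg hh).mono (by omega)).add (HlpUp.add hg hh)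

theorem hlp_pow_mem (k p : ℕ) [Fact p.Prime] (g : (Matrix (Fin k) (Fin k) (ZMod p))ˣ)
    (hg : g ∈ hlpMon k p) : g ^ p ^ k = 1 := by
  rcases Nat.eq_zero_or_pos k with rfl | hk
  · exact Subsingleton.elim _ _
  have : Nonempty (Fin k) := ⟨⟨0, hk⟩⟩
  have h1 : ((g : Matrix (Fin k) (Fin k) (ZMod p)) - 1) ^ p ^ k = 0 :=
    (HlpUp.pow hg _).eq_zero (Nat.lt_pow_self (Fact.out : p.Prime).one_lt).le
  rw [sub_pow_char_pow_of_commute (p := p) (h := Commute.one_right _), one_pow, sub_eq_zero] at h1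
  exact Units.ext (by simpa using h1)

/-- Unitriangular group. -/
def hlpGrp (k p : ℕ) [Fact p.Prime] : Subgroup (Matrix (Fin k) (Fin k) (ZMod p))ˣ :=
  { hlpMon k p with
    inv_mem' := by
      intro g hg
      have h1 := hlp_pow_mem k p g hg
      have hpos : 0 < p ^ k := pow_pos (Fact.out : p.Prime).pos _
      have : g⁻¹ = g ^ (p ^ k - 1) := by
        rw [inv_eq_iff_mul_eq_one, ← pow_succ', Nat.sub_add_cancel hpos, h1]
      change g⁻¹ ∈ hlpMon k p
      rw [this]
      exact pow_mem hg _ }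

/-- `1 + e N` as a unit when `N² = 0`. -/
def hlpUnit {R : Type*} [Ring R] (N : R) (hN : N * N = 0) : Rˣ where
  val := 1 + N
  inv := 1 - N
  val_inv := by
    have : (1 + N) * (1 - N) = 1 - N * N := by noncomm_ring
    rw [this, hN, sub_zero]
  inv_val := by
    have : (1 - N) * (1 + N) = 1 - N * N := by noncomm_ring
    rw [this, hN, sub_zero]

theorem hlpUnit_val {R : Type*} [Ring R] (N : R) (hN : N * N = 0) :
    ((hlpUnit N hN : Rˣ) : R) = 1 + N := rfl

theorem hlpUnit_inv {R : Type*} [Ring R] (N : R) (hN : N * N = 0) :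
    (((hlpUnit N hN)⁻¹ : Rˣ) : R) = 1 - N := rfl

theorem hlpUnit_zpow {R : Type*} [Ring R] (N : R) (hN : N * N = 0) (e : ℤ) :
    ((hlpUnit N hN ^ e : Rˣ) : R) = 1 + (e : R) * N := by
  induction e with
  | zero => simp
  | succ i ih =>
    rw [zpow_add_one, Units.val_mul, ih]
    push_cast
    have : (1 + (i : R) * N) * (1 + N) = 1 + ((i : R) + 1) * N + i * (N * N) := by noncomm_ring
    rw [hlpUnit_val, this, hN, mul_zero, add_zero]
  | pred i ih =>
    rw [zpow_sub_one, Units.val_mul, ih]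
    push_cast
    have : (1 + (-(i : R)) * N) * (1 - N) = 1 + (-(i : R) - 1) * N + i * (N * N) := by noncomm_ring
    rw [hlpUnit_inv, this, hN, mul_zero, add_zero]

open Classical in
/-- The nilpotent matrix attached to a letter. -/
noncomputable def hlpN {α : Type*} (L : List (α × ℤ)) (p : ℕ) (i : α) :
    Matrix (Fin (L.length + 1)) (Fin (L.length + 1)) (ZMod p) :=
  fun a b => if (b : ℕ) = a + 1 ∧ (L[(a : ℕ)]?).map Prod.fst = some i then 1 else 0

theorem hlpN_up {α : Type*} (L : List (α × ℤ)) (p : ℕ) (i : α) : HlpUp 1 (hlpN L p i) := by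
  intro a b hab
  unfold hlpN
  rw [if_neg]
  omega

theorem hlpN_sq {α : Type*} (L : List (α × ℤ)) (hL : L.IsChain (fun a b => a.1 ≠ b.1))
    (p : ℕ) (i : α) : hlpN L p i * hlpN L p i = 0 := by
  ext a c
  rw [Matrix.mul_apply]
  refine Finset.sum_eq_zero fun b _ => ?_
  unfold hlpN
  by_cases h1 : (b : ℕ) = a + 1 ∧ (L[(a : ℕ)]?).map Prod.fst = some i
  · by_cases h2 : (c : ℕ) = b + 1 ∧ (L[(b : ℕ)]?).map Prod.fst = some i
    · exfalso
      obtain ⟨h1, h1'⟩ := h1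
      obtain ⟨h2, h2'⟩ := h2
      rw [h1] at h2'
      have hlt : (a : ℕ) + 1 < L.length := by omega
      rw [List.getElem?_eq_getElem hlt] at h2'
      rw [List.getElem?_eq_getElem (by omega)] at h1'
      have := List.isChain_iff_getElem.1 hL a hlt
      simp at h1' h2'
      exact this (h1'.trans h2'.symm)
    · rw [if_neg h2, mul_zero]
  · rw [if_neg h1, zero_mul]

theorem hlp_vec {α : Type*} (L : List (α × ℤ)) (p : ℕ) [Fact p.Prime]
    (hp : ∀ a ∈ L, (a.2 : ZMod p) ≠ 0) (suf : List (α × ℤ)) : ∀ pre, pre ++ suf = L →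
    (∀ a : Fin (L.length + 1), (a : ℕ) < pre.length →
      (suf.map fun x => 1 + ((x.2 : ℤ) : Matrix (Fin (L.length + 1)) (Fin (L.length + 1)) (ZMod p))
        * hlpN L p x.1).prod a (Fin.last _) = 0) ∧
    (∀ a : Fin (L.length + 1), (a : ℕ) = pre.length →
      (suf.map fun x => 1 + ((x.2 : ℤ) : Matrix (Fin (L.length + 1)) (Fin (L.length + 1)) (ZMod p))
        * hlpN L p x.1).prod a (Fin.last _) ≠ 0) := by
  induction suf with
  | nil =>
    intro pre hpre
    simp only [List.append_nil] at hpre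
    subst hpre
    constructor
    · intro a ha
      have : a ≠ Fin.last _ := by rintro rfl; simp at ha
      simp [this]
    · intro a ha
      have : a = Fin.last _ := Fin.ext (by simpa using ha)
      simp [this]
  | cons x suf ih =>
    intro pre hpre
    obtain ⟨h1, h2⟩ := ih (pre ++ [x]) (by simpa using hpre)
    simp only [List.length_append, List.length_singleton] at h1 h2
    simp only [List.map_cons, List.prod_cons]
    generalize (suf.map fun x =>
      1 + ((x.2 : ℤ) : Matrix (Fin (L.length + 1)) (Fin (L.length + 1)) (ZMod p))
        * hlpN L p x.1).prod = V at h1 h2 ⊢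
    have e : ∀ a, ((1 + ((x.2 : ℤ) : Matrix (Fin (L.length + 1)) (Fin (L.length + 1)) (ZMod p))
        * hlpN L p x.1) * V) a (Fin.last _) = V a (Fin.last _) +
          (x.2 : ZMod p) * ∑ b, hlpN L p x.1 a b * V b (Fin.last _) := by
      intro a
      rw [← zsmul_eq_mul, add_mul, one_mul, Matrix.add_apply, smul_mul_assoc, Matrix.smul_apply,
        Matrix.mul_apply, zsmul_eq_mul]
    have hlen : pre.length < L.length := by rw [← hpre]; simp
    constructor
    · intro a ha
      rw [e, h1 a (by omega), Finset.sum_eq_zero, mul_zero, add_zero]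
      intro b _
      by_cases hb : (b : ℕ) < pre.length + 1
      · rw [h1 b hb, mul_zero]
      · have : hlpN L p x.1 a b = 0 := by
          unfold hlpN; rw [if_neg]; omega
        rw [this, zero_mul]
    · intro a ha
      rw [e, h1 a (by omega), zero_add, Finset.sum_eq_single ⟨a + 1, by omega⟩]
      · have : hlpN L p x.1 a ⟨a + 1, by omega⟩ = 1 := by
          unfold hlpN
          rw [if_pos]
          refine ⟨rfl, ?_⟩
          have : L[(a : ℕ)]? = some x := by rw [ha, ← hpre]; simp
          rw [this]; rfl
        rw [this, one_mul]
        exact mul_ne_zero (hp x (by rw [← hpre]; simp)) (h2 _ (by simp [ha]))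
      · intro b _ hb
        have : hlpN L p x.1 a b = 0 := by
          unfold hlpN
          rw [if_neg]
          rintro ⟨h, _⟩
          exact hb (Fin.ext h)
        rw [this, zero_mul]
      · simp

/-- Free groups are residually finite-`p` for almost all `p` (elementwise). -/
theorem hlp_resid {α : Type*} (v : FreeGroup α) (hv : v ≠ 1) :
    ∃ m : ℤ, m ≠ 0 ∧ ∀ p : ℕ, p.Prime → ¬ (p : ℤ) ∣ m →
      ∃ (P : Type) (_ : Group P) (_ : Finite P) (_ : IsPGroup p P) (ψ : FreeGroup α →* P),
        ψ v ≠ 1 := by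
  obtain ⟨L, hL, hL0, rfl⟩ := hlp_syll v
  refine ⟨(L.map Prod.snd).prod, ?_, ?_⟩
  · rw [Ne, List.prod_eq_zero_iff]
    intro h
    obtain ⟨a, ha, h⟩ := List.mem_map.1 h
    exact hL0 a ha h
  intro p hp hdvd
  haveI : Fact p.Prime := ⟨hp⟩
  have hLp : ∀ a ∈ L, (a.2 : ZMod p) ≠ 0 := by
    intro a ha h
    rw [ZMod.intCast_zmod_eq_zero_iff_dvd] at h
    exact hdvd (h.trans (List.dvd_prod (List.mem_map_of_mem ha)))
  let U : α → (Matrix (Fin (L.length + 1)) (Fin (L.length + 1)) (ZMod p))ˣ :=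
    fun i => hlpUnit (hlpN L p i) (hlpN_sq L hL p i)
  have hU : ∀ i, U i ∈ hlpGrp (L.length + 1) p := by
    intro i
    change HlpUp 1 ((1 + hlpN L p i) - 1)
    rw [add_sub_cancel_left]
    exact hlpN_up L p i
  refine ⟨hlpGrp (L.length + 1) p, inferInstance, inferInstance, ?_,
    FreeGroup.lift fun i => ⟨U i, hU i⟩, ?_⟩
  · intro g
    exact ⟨_, Subtype.ext (hlp_pow_mem _ p g.1 g.2)⟩
  · intro h
    have h' := congrArg (fun g : hlpGrp (L.length + 1) p =>
      ((g : (Matrix (Fin (L.length + 1)) (Fin (L.length + 1)) (ZMod p))ˣ) :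
        Matrix (Fin (L.length + 1)) (Fin (L.length + 1)) (ZMod p))) h
    have e : ∀ S : List (α × ℤ), (((FreeGroup.lift fun i => (⟨U i, hU i⟩ : hlpGrp (L.length + 1) p))
        (S.map fun a => FreeGroup.of a.1 ^ a.2).prod :
          (Matrix (Fin (L.length + 1)) (Fin (L.length + 1)) (ZMod p))ˣ) :
        Matrix (Fin (L.length + 1)) (Fin (L.length + 1)) (ZMod p)) =
        (S.map fun x =>
          1 + ((x.2 : ℤ) : Matrix (Fin (L.length + 1)) (Fin (L.length + 1)) (ZMod p))
            * hlpN L p x.1).prod := by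
      intro S
      induction S with
      | nil => simp
      | cons x S ih =>
        rw [List.map_cons, List.prod_cons, List.map_cons, List.prod_cons, map_mul,
          Subgroup.coe_mul, Units.val_mul, ih, map_zpow, FreeGroup.lift_apply_of,
          Subgroup.coe_zpow, hlpUnit_zpow]
    simp only [e] at h'
    have h0 : L ≠ [] := by
      rintro rfl
      simp at hv
    have := (hlp_vec L p hLp L [] rfl).2 0 rfl
    rw [h'] at this
    apply this
    have hne : (0 : Fin (L.length + 1)) ≠ Fin.last _ := by
      intro h
      have := congrArg Fin.val h
      simp at this
      exact h0 (List.length_eq_zero_iff.1 this.symm)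
    simp [hne]

/-- Extending an independent family of words to a nonsingular square system. -/
theorem hlp_extend {n : ℕ} {κ : Type} [Finite κ] (f : κ → FreeGroup (Fin n))
    (hf : LinearIndependent ℤ fun k => wordBar (f k)) :
    ∃ (u : Fin n → FreeGroup (Fin n)) (σ : κ → Fin n), Function.Injective σ ∧
      (∀ k, u (σ k) = f k) ∧ (Matrix.of fun i => wordBar (u i)).det ≠ 0 := by
  classical
  let F : κ ⊕ Fin n → FreeGroup (Fin n) := Sum.elim f FreeGroup.of
  let c : (Fin n → ℤ) →ₗ[ℤ] (Fin n → ℚ) := (Algebra.linearMap ℤ ℚ).compLeft (Fin n)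
  have hc : ∀ x j, c x j = (x j : ℚ) := fun _ _ => rfl
  have hcinj : LinearMap.ker c = ⊥ := by
    rw [LinearMap.ker_eq_bot]
    intro x y hxy
    funext j
    have := congrFun hxy j
    rw [hc, hc] at this
    exact_mod_cast this
  have h1 : LinearIndependent ℚ fun k => c (wordBar (f k)) := by
    rw [← LinearIndependent.iff_fractionRing ℤ ℚ]
    exact hf.map' c hcinj
  have h2 : LinearIndepOn ℚ (fun x => c (wordBar (F x))) (Set.range Sum.inl) := by
    rw [linearIndepOn_range_iff Sum.inl_injective]
    exact h1
  obtain ⟨b, -, hb, hspan, hli⟩ := exists_linearIndepOn_extension h2 (Set.subset_univ _)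
  have hof : ∀ j, c (wordBar (F (Sum.inr j))) = Pi.single j 1 := by
    intro j
    funext k
    rw [hc]
    simp [F, wordBar, freeAbelianization, Pi.single_apply]
  have htop : ⊤ ≤ Submodule.span ℚ (Set.range fun x : b => c (wordBar (F x))) := by
    rw [← (Pi.basisFun ℚ (Fin n)).span_eq, Submodule.span_le]
    rintro _ ⟨j, rfl⟩
    have : Pi.basisFun ℚ (Fin n) j = c (wordBar (F (Sum.inr j))) := by
      rw [hof]; simp
    rw [this]
    have := hspan ⟨Sum.inr j, trivial, rfl⟩
    rwa [Set.image_eq_range] at this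
  let B := Module.Basis.mk hli htop
  let e : b ≃ Fin n := B.indexEquiv (Pi.basisFun ℚ (Fin n))
  refine ⟨fun i => F (e.symm i), fun k => e ⟨Sum.inl k, hb ⟨k, rfl⟩⟩, ?_, ?_, ?_⟩
  · intro k l hkl
    simpa using hkl
  · intro k
    simp [F]
  · have hli' : LinearIndependent ℚ (fun i => c (wordBar (F (e.symm i)))) :=
      LinearIndependent.comp hli e.symm e.symm.injective
    have h3 : LinearIndependent ℚ
        ((Matrix.of fun i => wordBar (F (e.symm i))).map (Int.castRingHom ℚ)).row := hli'
    rw [Matrix.linearIndependent_rows_iff_isUnit, Matrix.isUnit_iff_isUnit_det,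
      isUnit_iff_ne_zero] at h3
    intro h0
    apply h3
    have := (RingHom.map_det (Int.castRingHom ℚ) (Matrix.of fun i => wordBar (F (e.symm i)))).symm
    rw [RingHom.mapMatrix_apply] at this
    rw [this, h0, map_zero]

/-- **(Stallings-type consequence, Fr\o yshov.)** Let `H = Fₙ / N(w₁,…,wₛ)` with the
abelianized relators `w̄ᵢ ∈ ℤⁿ` linearly independent.  If `h₁,…,h_r ∈ H` are such that no
nontrivial integer combination of their images in the abelianization of `H` is torsion,
then `h₁,…,h_r` freely generate a free subgroup of `H` of rank `r`: the induced
homomorphism `F_r →* H` is injective. -/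
theorem free_subgroup_of_lin_indep
    (n s r : ℕ) (w : Fin s → FreeGroup (Fin n))
    (hw : LinearIndependent ℤ fun i => wordBar (w i))
    (h : Fin r → FreeGroup (Fin n) ⧸ Subgroup.normalClosure (Set.range w))
    (hh : ∀ c : Fin r → ℤ, c ≠ 0 →
      ¬ IsOfFinOrder (∏ i, (Abelianization.of (h i)) ^ (c i))) :
    Function.Injective (FreeGroup.lift h :
      FreeGroup (Fin r) →* FreeGroup (Fin n) ⧸ Subgroup.normalClosure (Set.range w)) := by
  classical
  choose h' hh' using fun i => QuotientGroup.mk_surjective (h i)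
  let f : Fin s ⊕ Fin r → FreeGroup (Fin n) := Sum.elim w h'
  have hf : LinearIndependent ℤ fun k => wordBar (f k) := by
    rw [Fintype.linearIndependent_iff]
    intro g hg
    let q : FreeGroup (Fin n) →*
        Abelianization (FreeGroup (Fin n) ⧸ Subgroup.normalClosure (Set.range w)) :=
      Abelianization.of.comp (QuotientGroup.mk' _)
    have hq : ∏ k, q (f k) ^ g k = 1 := by
      simp only [hlp_comm_eval q (f _), ← Finset.prod_zpow]
      rw [Finset.prod_comm]
      refine Finset.prod_eq_one fun j _ => ?_
      have := congrFun hg j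
      simp only [Finset.sum_apply, Pi.smul_apply, smul_eq_mul, Pi.zero_apply] at this
      simp only [← zpow_mul]
      rw [hlp_zpow_sum]
      simp only [mul_comm _ (g _), this, zpow_zero]
    have hqw : ∀ i, q (w i) = 1 := by
      intro i
      have : QuotientGroup.mk' (Subgroup.normalClosure (Set.range w)) (w i) = 1 :=
        (QuotientGroup.eq_one_iff _).2 (Subgroup.subset_normalClosure ⟨i, rfl⟩)
      simp only [q, MonoidHom.comp_apply, this, map_one]
    have hqh : ∀ i, q (h' i) = Abelianization.of (h i) := by
      intro i
      rw [← hh' i]; rfl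
    have hr : (fun i => g (Sum.inr i)) = 0 := by
      by_contra hne
      apply hh _ hne
      rw [Fintype.prod_sum_type] at hq
      simp only [f, Sum.elim_inl, Sum.elim_inr, hqw, hqh, one_zpow, Finset.prod_const_one,
        one_mul] at hq
      rw [hq]
      exact IsOfFinOrder.one
    have hl : ∀ i, g (Sum.inl i) = 0 := by
      rw [Fintype.sum_sum_type] at hg
      have hr' : ∀ i, g (Sum.inr i) = 0 := fun i => congrFun hr i
      simp only [hr', zero_smul, Finset.sum_const_zero, add_zero] at hg
      exact Fintype.linearIndependent_iff.1 hw _ hg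
    rintro (i | i)
    · exact hl i
    · exact congrFun hr i
  obtain ⟨u, σ, hσ, hu, hdet⟩ := hlp_extend f hf
  rw [injective_iff_map_eq_one]
  intro v hv
  by_contra hv1
  obtain ⟨m, hm, hres⟩ := hlp_resid v hv1
  set D := (Matrix.of fun i => wordBar (u i)).det with hD
  obtain ⟨p, hpge, hp⟩ := Nat.exists_infinite_primes ((m * D).natAbs + 1)
  have hpd : ¬ (p : ℤ) ∣ m * D := by
    intro hd
    have := Nat.le_of_dvd (Int.natAbs_pos.2 (mul_ne_zero hm hdet)) (Int.natCast_dvd.1 hd)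
    omega
  obtain ⟨P, _, _, hP, ψ, hψ⟩ := hres p hp (fun hd => hpd (hd.mul_right _))
  haveI : Fact p.Prime := ⟨hp⟩
  haveI := hP.isNilpotent
  have hco : IsCoprime (Nat.card P : ℤ) D := by
    obtain ⟨k, hk⟩ := IsPGroup.iff_card.1 hP
    rw [hk]
    push_cast
    refine IsCoprime.pow_left ?_
    rw [(Nat.prime_iff_prime_int.1 hp).irreducible.coprime_iff_not_dvd]
    exact fun hd => hpd (hd.mul_left _)
  let t : Fin s ⊕ Fin r → P := Sum.elim (fun _ => 1) (fun i => ψ (FreeGroup.of i))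
  obtain ⟨x, hx⟩ := hlp_surj u P hco (Function.extend σ t 1)
  have hxf : ∀ k, FreeGroup.lift x (f k) = t k := by
    intro k
    rw [← hu, hx, hσ.extend_apply]
  have hker : Subgroup.normalClosure (Set.range w) ≤ (FreeGroup.lift x).ker := by
    refine Subgroup.normalClosure_le_normal ?_
    rintro _ ⟨i, rfl⟩
    exact hxf (Sum.inl i)
  let φ := QuotientGroup.lift (Subgroup.normalClosure (Set.range w)) (FreeGroup.lift x) hker
  have hcomp : φ.comp (FreeGroup.lift h) = ψ := by
    ext i
    rw [MonoidHom.comp_apply, FreeGroup.lift_apply_of, ← hh' i]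
    exact hxf (Sum.inr i)
  apply hψ
  rw [← hcomp, MonoidHom.comp_apply, hv, map_one]
end

section
/- The identity 1 is the only singular value of the commutator map on the group of unit quaternions. Precisely: regard the unit sphere S³ = {q ∈ ℍ : ‖q‖ = 1} as a smooth manifold (the sphere in the 4-dimensional real inner product space ℍ = Quaternion ℝ, using Fact (finrank ℝ ℍ = 3 + 1)), and let c : S³ × S³ → S³ be the smooth map c(g, h) = g * h * g⁻¹ * h⁻¹. Then for every (g, h) ∈ S³ × S³ with c(g, h) ≠ 1, the manifold derivative of c at (g, h) (Mathlib: mfderiv) is a surjective linear map from the tangent space of S³ × S³ at (g, h) onto the tangent space of S³ at c(g, h). -/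
open scoped Manifold

noncomputable section

instance : Fact (Module.finrank ℝ (Quaternion ℝ) = 3 + 1) :=
  ⟨Quaternion.finrank_eq_four⟩

/-- `S³`, the unit sphere in the quaternions, as a smooth manifold and a group. -/
abbrev S3 : Type := Metric.sphere (0 : Quaternion ℝ) 1

open scoped ContDiff Quaternion

theorem commute_of_commute (A B z : Quaternion ℝ) (h1 : A * z = z * A) (h2 : B * z = z * B)
    (hne : A * B ≠ B * A) : z.imI = 0 ∧ z.imJ = 0 ∧ z.imK = 0 := by
  simp only [Ne, Quaternion.ext_iff, Quaternion.re_mul, Quaternion.imI_mul, Quaternion.imJ_mul,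
    Quaternion.imK_mul] at *
  obtain ⟨-, a1, a2, a3⟩ := h1
  obtain ⟨-, b1, b2, b3⟩ := h2
  by_contra hz
  apply hne
  have key : ∀ x : ℝ, (z.imI * x = 0) → (z.imJ * x = 0) → (z.imK * x = 0) → x = 0 := by
    intro x x1 x2 x3
    by_contra hx
    simp [hx] at x1 x2 x3
    exact hz ⟨x1, x2, x3⟩
  refine ⟨by ring, ?_, ?_, ?_⟩ <;> rw [← sub_eq_zero] <;> apply key <;> grind

theorem range_eq (A B w : Quaternion ℝ) (hA : star A * A = 1) (hB : star B * B = 1)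
    (hne : A * B ≠ B * A) (hw : w.re = 0) :
    ∃ u v : Quaternion ℝ, (u - A * u * star A) + (v - B * v * star B) = w := by
  let M : (Quaternion ℝ × Quaternion ℝ) →ₗ[ℝ] Quaternion ℝ :=
    { toFun := fun p => (p.1 - A * p.1 * star A) + (p.2 - B * p.2 * star B)
      map_add' := by intro x y; simp; noncomm_ring
      map_smul' := by intro r x; simp [smul_sub, smul_add] }
  suffices h : w ∈ LinearMap.range M by
    obtain ⟨⟨u, v⟩, h⟩ := h
    exact ⟨u, v, h⟩
  rw [← Submodule.orthogonal_orthogonal (LinearMap.range M), Submodule.mem_orthogonal]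
  intro z hz
  rw [Submodule.mem_orthogonal'] at hz
  have comm : ∀ C : Quaternion ℝ, star C * C = 1 →
      (∀ u, inner ℝ z (u - C * u * star C) = 0) → C * z = z * C := by
    intro C hC h
    have : z - star C * z * C = 0 := by
      rw [← inner_self_eq_zero (𝕜 := ℝ), ← h (z - star C * z * C)]
      generalize hu : z - star C * z * C = u
      nth_rewrite 1 [← hu]
      simp only [Quaternion.inner_def, Quaternion.re_mul, Quaternion.imI_mul, Quaternion.imJ_mul,
        Quaternion.imK_mul, star_sub, star_mul, star_star, mul_sub, sub_mul, Quaternion.re_sub,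
        Quaternion.re_star, Quaternion.imI_star, Quaternion.imJ_star, Quaternion.imK_star]
      ring
    have hC' : C * star C = 1 := by
      rw [Quaternion.self_mul_star, ← Quaternion.star_mul_self, hC]
    calc C * z = C * (star C * z * C) := by rw [← sub_eq_zero.1 this]
      _ = (C * star C) * z * C := by noncomm_ring
      _ = _ := by rw [hC', one_mul]
  have h1 := comm A hA (fun u => by
    simpa [M] using hz (M (u, 0)) ⟨_, rfl⟩)
  have h2 := comm B hB (fun u => by
    simpa [M] using hz (M (0, u)) ⟨_, rfl⟩)
  obtain ⟨a, b, c⟩ := commute_of_commute A B z h1 h2 hne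
  simp [Quaternion.inner_def, a, b, c, hw]

theorem coe_inv_S3 (x : S3) : ((x⁻¹ : S3) : Quaternion ℝ) = star (x : Quaternion ℝ) := by
  have : ‖(x : Quaternion ℝ)‖ = 1 := by simp
  simp [Quaternion.inv_def, Quaternion.normSq_eq_norm_mul_self, this]

theorem star_mul_S3 (x : S3) : star (x : Quaternion ℝ) * x = 1 := by
  rw [← coe_inv_S3]; exact congrArg Subtype.val (inv_mul_cancel x)

theorem mul_star_S3 (x : S3) : (x : Quaternion ℝ) * star (x : Quaternion ℝ) = 1 := by
  rw [← coe_inv_S3]; exact congrArg Subtype.val (mul_inv_cancel x)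

theorem lin_alg (g h : S3) (hp : g * h * g⁻¹ * h⁻¹ ≠ 1) (y : Quaternion ℝ)
    (hy : inner ℝ ((g * h * g⁻¹ * h⁻¹ : S3) : Quaternion ℝ) y = 0) :
    ∃ a b : Quaternion ℝ, inner ℝ (g : Quaternion ℝ) a = 0 ∧ inner ℝ (h : Quaternion ℝ) b = 0 ∧
      a * h * star (g : Quaternion ℝ) * star (h : Quaternion ℝ)
      + g * b * star (g : Quaternion ℝ) * star (h : Quaternion ℝ)
      + g * h * star a * star (h : Quaternion ℝ)
      + g * h * star (g : Quaternion ℝ) * star b = y := by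
  set c : S3 := g * h * g⁻¹ * h⁻¹ with hc
  let A : S3 := g * h * g⁻¹
  let B : S3 := c * g⁻¹
  have hAB : (A : Quaternion ℝ) * B ≠ B * A := by
    intro e
    have e' : A * B = B * A := Subtype.ext e
    apply hp
    have e2 : h * (h * g⁻¹ * h⁻¹) * g⁻¹ = h * g⁻¹ * g⁻¹ := by
      have : g * (h * (h * g⁻¹ * h⁻¹) * g⁻¹) = g * (h * g⁻¹ * g⁻¹) := by
        simpa [A, B, hc, mul_assoc] using e'
      exact mul_left_cancel this
    have e3 := mul_left_cancel (a := h) (by simpa [mul_assoc] using mul_right_cancel e2 :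
      h * (h * g⁻¹ * h⁻¹) = h * g⁻¹)
    rw [hc]
    calc g * h * g⁻¹ * h⁻¹ = g * (h * g⁻¹ * h⁻¹) := by group
      _ = 1 := by rw [e3]; group
  obtain ⟨u, v, huv⟩ := range_eq A B (y * star (c : Quaternion ℝ)) (star_mul_S3 A) (star_mul_S3 B)
    hAB (by rw [real_inner_comm] at hy; simpa [Quaternion.inner_def] using hy)
  have hu0 : star (u - (u.re : Quaternion ℝ)) = -(u - (u.re : Quaternion ℝ)) := by
    ext <;> simp
  have hv0 : star (v - (v.re : Quaternion ℝ)) = -(v - (v.re : Quaternion ℝ)) := by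
    ext <;> simp
  have key : ∀ (C : S3) (u : Quaternion ℝ), u - C * u * star (C : Quaternion ℝ) =
      (u - (u.re : Quaternion ℝ)) -
        C * (u - (u.re : Quaternion ℝ)) * star (C : Quaternion ℝ) := by
    intro C u
    have : (C : Quaternion ℝ) * (u.re : Quaternion ℝ) * star (C : Quaternion ℝ)
        = (u.re : Quaternion ℝ) := by
      rw [← (Quaternion.coe_commutes u.re (C : Quaternion ℝ)), mul_assoc, mul_star_S3, mul_one]
    rw [mul_sub, sub_mul, this]
    abel
  rw [key A, key B] at huv
  generalize u - (u.re : Quaternion ℝ) = x at *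
  generalize v - (v.re : Quaternion ℝ) = z at *
  have re0 : ∀ x : Quaternion ℝ, star x = -x → x.re = 0 := by
    intro x hx
    have := congrArg (fun t : Quaternion ℝ => t.re) hx
    simp at this
    linarith
  have perp : ∀ (C : S3) (x : Quaternion ℝ), star x = -x →
      inner ℝ (C : Quaternion ℝ) (x * C) = 0 := by
    intro C x hx
    rw [Quaternion.inner_def, star_mul, ← mul_assoc, mul_star_S3, one_mul, hx]
    simp [re0 x hx]
  have hz' : star (star (g : Quaternion ℝ) * z * g) = -(star (g : Quaternion ℝ) * z * g) := by
    simp [hv0, mul_assoc]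
  refine ⟨x * g, star (g : Quaternion ℝ) * z * g * h, perp g x hu0, perp h _ hz', ?_⟩
  have ey : y = y * star (c : Quaternion ℝ) * c := by
    rw [mul_assoc, star_mul_S3, mul_one]
  have eA : star (A : Quaternion ℝ) * c = star (h : Quaternion ℝ) := by
    rw [← coe_inv_S3, ← coe_inv_S3]
    have : A⁻¹ * c = h⁻¹ := by simp only [A, hc]; group
    exact congrArg Subtype.val this
  have eB : star (B : Quaternion ℝ) * c = g := by
    rw [← coe_inv_S3]
    have : B⁻¹ * c = g := by simp only [B]; group
    exact congrArg Subtype.val this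
  have cA : (A : Quaternion ℝ) = g * h * star (g : Quaternion ℝ) := by
    rw [← coe_inv_S3]; rfl
  have cC : (c : Quaternion ℝ) = g * h * star (g : Quaternion ℝ) * star (h : Quaternion ℝ) := by
    rw [← coe_inv_S3, ← coe_inv_S3]; rfl
  have cB : (B : Quaternion ℝ) = c * star (g : Quaternion ℝ) := by
    rw [← coe_inv_S3]; rfl
  have e1 : (x - A * x * star (A : Quaternion ℝ) + (z - B * z * star (B : Quaternion ℝ))) * c
      = x * c - A * x * star (h : Quaternion ℝ) + (z * c - B * z * g) := by
    rw [← eA]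
    conv_rhs => rw [← eB]
    noncomm_ring
  rw [ey, ← huv, e1, cA, cB, cC, star_mul, star_mul, hz', hu0]
  have e2 : (g : Quaternion ℝ) * (star (g : Quaternion ℝ) * z * g * h) * star (g : Quaternion ℝ)
      * star (h : Quaternion ℝ)
      = z * (g * h * star (g : Quaternion ℝ) * star (h : Quaternion ℝ)) := by
    calc _ = (g * star (g : Quaternion ℝ)) * (z * (g * h * star (g : Quaternion ℝ) * star (h : Quaternion ℝ))) := by noncomm_ring
      _ = _ := by rw [mul_star_S3, one_mul]
  rw [e2]
  noncomm_ring

def FF (q : S3 × S3) : Quaternion ℝ :=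
  q.1 * q.2 * star (q.1 : Quaternion ℝ) * star (q.2 : Quaternion ℝ)

theorem FF_eq (q : S3 × S3) : ((q.1 * q.2 * q.1⁻¹ * q.2⁻¹ : S3) : Quaternion ℝ) = FF q := by
  simp only [FF, ← coe_inv_S3]; rfl

def G (q : Quaternion ℝ × Quaternion ℝ) : Quaternion ℝ := q.1 * q.2 * star q.1 * star q.2

def starCLM : Quaternion ℝ →L[ℝ] Quaternion ℝ :=
  LinearMap.toContinuousLinearMap
    { toFun := fun x => star x
      map_add' := fun x y => star_add x y
      map_smul' := fun r x => by ext <;> simp }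

theorem starCLM_apply (x : Quaternion ℝ) : starCLM x = star x := rfl

theorem G_deriv (q : Quaternion ℝ × Quaternion ℝ) :
    ∃ L : (Quaternion ℝ × Quaternion ℝ) →L[ℝ] Quaternion ℝ,
    HasFDerivAt G L q ∧ ∀ a b, L (a, b) = a * q.2 * star q.1 * star q.2
      + q.1 * b * star q.1 * star q.2
      + q.1 * q.2 * star a * star q.2
      + q.1 * q.2 * star q.1 * star b := by
  have h1 : HasFDerivAt (fun q : Quaternion ℝ × Quaternion ℝ => q.1)
    (ContinuousLinearMap.fst ℝ _ _) q := hasFDerivAt_fst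
  have h2 : HasFDerivAt (fun q : Quaternion ℝ × Quaternion ℝ => q.2)
    (ContinuousLinearMap.snd ℝ _ _) q := hasFDerivAt_snd
  have h3 : HasFDerivAt (fun q : Quaternion ℝ × Quaternion ℝ => star q.1)
    (starCLM.comp (ContinuousLinearMap.fst ℝ _ _)) q := starCLM.hasFDerivAt.comp q h1
  have h4 : HasFDerivAt (fun q : Quaternion ℝ × Quaternion ℝ => star q.2)
    (starCLM.comp (ContinuousLinearMap.snd ℝ _ _)) q := starCLM.hasFDerivAt.comp q h2
  have h5 := ((h1.mul' h2).mul' h3).mul' h4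
  refine ⟨_, h5, ?_⟩
  intro a b
  simp only [add_apply, smul_apply, Pi.mul_apply,
    ContinuousLinearMap.comp_apply, ContinuousLinearMap.coe_fst', ContinuousLinearMap.coe_snd',
    starCLM_apply, smul_eq_mul, MulOpposite.smul_eq_mul_unop, MulOpposite.unop_op]
  noncomm_ring

theorem G_smooth : ContDiff ℝ 1 G := by
  have h1 : ContDiff ℝ 1 (fun q : Quaternion ℝ × Quaternion ℝ => star q.1) :=
    starCLM.contDiff.comp contDiff_fst
  have h2 : ContDiff ℝ 1 (fun q : Quaternion ℝ × Quaternion ℝ => star q.2) :=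
    starCLM.contDiff.comp contDiff_snd
  exact ((contDiff_fst.mul contDiff_snd).mul h1).mul h2

theorem hasMFDerivAt_prodMk_space {E H M F F' : Type*} [NormedAddCommGroup E] [NormedSpace ℝ E]
    [TopologicalSpace H] {I : ModelWithCorners ℝ E H} [TopologicalSpace M] [ChartedSpace H M]
    [NormedAddCommGroup F] [NormedSpace ℝ F] [NormedAddCommGroup F'] [NormedSpace ℝ F']
    {f : M → F} {g : M → F'} {x : M}
    {df : TangentSpace I x →L[ℝ] F} {dg : TangentSpace I x →L[ℝ] F'}
    (hf : HasMFDerivAt I 𝓘(ℝ, F) f x df) (hg : HasMFDerivAt I 𝓘(ℝ, F') g x dg) :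
    HasMFDerivAt I 𝓘(ℝ, F × F') (fun y => (f y, g y)) x (df.prod dg) :=
  ⟨hf.1.prodMk hg.1, hf.2.prodMk hg.2⟩

theorem hasMFDerivAt_val (x : S3) : HasMFDerivAt (𝓡 3) 𝓘(ℝ, Quaternion ℝ)
    (Subtype.val : S3 → Quaternion ℝ) x
    (mfderiv (𝓡 3) 𝓘(ℝ, Quaternion ℝ) (Subtype.val : S3 → Quaternion ℝ) x) :=
  ((contMDiff_coe_sphere (m := 1) x).mdifferentiableAt one_ne_zero).hasMFDerivAt

theorem range_val (x : S3) (y : Quaternion ℝ) :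
    inner ℝ (x : Quaternion ℝ) y = 0 ↔ ∃ t : TangentSpace (𝓡 3) x,
      mfderiv (𝓡 3) 𝓘(ℝ, Quaternion ℝ) (Subtype.val : S3 → Quaternion ℝ) x t = y := by
  rw [← Submodule.mem_orthogonal_singleton_iff_inner_right, ← range_mvfderiv_subtypeVal (n := 3) x]
  exact Iff.rfl

theorem contMDiff_comm : ContMDiff ((𝓡 3).prod (𝓡 3)) (𝓡 3) 1
    (fun q : S3 × S3 => q.1 * q.2 * q.1⁻¹ * q.2⁻¹) := by
  have h : ContMDiff ((𝓡 3).prod (𝓡 3)) 𝓘(ℝ, Quaternion ℝ) 1 FF := by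
    have a0 : ContMDiff (𝓡 3) 𝓘(ℝ, Quaternion ℝ) 1 (Subtype.val : S3 → Quaternion ℝ) :=
      contMDiff_coe_sphere
    have a1 : ContMDiff ((𝓡 3).prod (𝓡 3)) 𝓘(ℝ, Quaternion ℝ) 1
        (fun q : S3 × S3 => (q.1 : Quaternion ℝ)) := a0.comp contMDiff_fst
    have a2 : ContMDiff ((𝓡 3).prod (𝓡 3)) 𝓘(ℝ, Quaternion ℝ) 1
        (fun q : S3 × S3 => (q.2 : Quaternion ℝ)) := a0.comp contMDiff_snd
    have h1 : ContMDiff ((𝓡 3).prod (𝓡 3)) 𝓘(ℝ, Quaternion ℝ × Quaternion ℝ) 1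
        (fun q : S3 × S3 => ((q.1 : Quaternion ℝ), (q.2 : Quaternion ℝ))) :=
      a1.prodMk_space a2
    have h3 := ContDiff.comp_contMDiff G_smooth h1
    have e : FF = G ∘ (fun q : S3 × S3 => ((q.1 : Quaternion ℝ), (q.2 : Quaternion ℝ))) := by
      funext q
      simp only [FF, G, Function.comp_apply]
    rw [e]
    exact h3
  have h2 := h.codRestrict_sphere (n := 3) (fun q => by rw [← FF_eq]; exact Subtype.property _)
  exact h2.congr (fun q => Subtype.ext (FF_eq q))

/-- **Lemma 3.3 (ii) (Fr\o yshov).** `1` is the only singular value of the commutator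
map `S³ × S³ → S³, (g,h) ↦ ghg⁻¹h⁻¹`: at every point where the commutator is not `1`,
the manifold derivative of the commutator map is surjective. -/
theorem commutator_map_submersion_away_from_one
    (p : S3 × S3) (hp : p.1 * p.2 * p.1⁻¹ * p.2⁻¹ ≠ 1) :
    Function.Surjective
      (mfderiv ((𝓡 3).prod (𝓡 3)) (𝓡 3)
        (fun q : S3 × S3 => q.1 * q.2 * q.1⁻¹ * q.2⁻¹) p) := by
  intro Y
  obtain ⟨a, b, ha, hb, hab⟩ := lin_alg p.1 p.2 hp _ ((range_val _ _).2 ⟨Y, rfl⟩)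
  obtain ⟨s, hs⟩ := (range_val _ _).1 ha
  obtain ⟨t, ht⟩ := (range_val _ _).1 hb
  have hc := ((contMDiff_comm p).mdifferentiableAt one_ne_zero).hasMFDerivAt
  have h1 := (hasMFDerivAt_val (p.1 * p.2 * p.1⁻¹ * p.2⁻¹)).comp p hc
  obtain ⟨L, hL, hL'⟩ := G_deriv ((p.1 : Quaternion ℝ), (p.2 : Quaternion ℝ))
  have b1 := (hasMFDerivAt_val p.1).comp p (hasMFDerivAt_fst (I := 𝓡 3) (I' := 𝓡 3) p)
  have b2 := (hasMFDerivAt_val p.2).comp p (hasMFDerivAt_snd (I := 𝓡 3) (I' := 𝓡 3) p)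
  have h2 := hasMFDerivAt_prodMk_space b1 b2
  have h3 := hL.hasMFDerivAt.comp p h2
  have h4 := hasMFDerivAt_unique h1 (h3.congr_of_eventuallyEq (Filter.Eventually.of_forall FF_eq))
  refine ⟨(s, t), ?_⟩
  apply injective_mvfderiv_subtypeVal_sphere (n := 3) (p.1 * p.2 * p.1⁻¹ * p.2⁻¹)
  have h5 := DFunLike.congr_fun h4 (s, t)
  refine h5.trans (Eq.trans ?_ hab)
  refine Eq.trans ?_ (hL' a b)
  rw [← hs, ← ht]
  rfl
end
end

section
/- Let 0 ≤ s ≤ n, let u₁,…,uₛ ∈ ℤⁿ be linearly independent, let K ⊆ ℤⁿ be the subgroup generated by u₁,…,uₛ, let A := ℤⁿ/K, and let T be the torsion subgroup of A (which is finite). Then for any z₁,…,z_{n−s} ∈ ℤⁿ and any group isomorphism θ : A/T ≅ ℤ^{n−s}, the absolute value of the determinant of the n×n integer matrix with rows u₁,…,uₛ, z₁,…,z_{n−s} equals |T| times the absolute value of the determinant of the (n−s)×(n−s) integer matrix with rows θ(z̄₁),…,θ(z̄_{n−s}), where z̄ⱼ denotes the image of zⱼ in A/T and |T| is the cardinality of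 T. -/
theorem aux_block {n s m : ℕ} (eq : Fin n ≃ Fin s ⊕ Fin m)
    (φ : (Fin n → ℤ) →ₗ[ℤ] (Fin m → ℤ)) (hφ : Function.Surjective φ) (hn : n = s + m)
    (u : Fin s → (Fin n → ℤ)) (hu : LinearIndependent ℤ u)
    (hk : ∀ i, φ (u i) = 0) (z : Fin m → (Fin n → ℤ)) :
    (Matrix.of fun i j => Sum.elim u z (eq i) j).det.natAbs =
      (Submodule.span ℤ (Set.range u)).toAddSubgroup.relIndex (LinearMap.ker φ).toAddSubgroup *
        (Matrix.of fun i j => φ (z i) j).det.natAbs := by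
  obtain ⟨g, hg⟩ := Module.projective_lifting_property φ LinearMap.id hφ
  have hg' : ∀ x, φ (g x) = x := fun x => by simpa using LinearMap.congr_fun hg x
  let e : (Fin n → ℤ) ≃ₗ[ℤ] (LinearMap.ker φ) × (Fin m → ℤ) :=
    LinearEquiv.ofLinearMap
      (LinearMap.prod (LinearMap.codRestrict (LinearMap.ker φ) (LinearMap.id - g ∘ₗ φ)
        (fun x => by simp [hg'])) φ)
      (LinearMap.coprod (LinearMap.ker φ).subtype g)
      (by
        apply LinearMap.ext
        rintro ⟨⟨p, hp⟩, y⟩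
        have hp' : φ p = 0 := hp
        ext <;> simp [hg', hp'])
      (by
        apply LinearMap.ext
        intro x
        simp)
  have hfr : Module.finrank ℤ (LinearMap.ker φ) = s := by
    have := e.finrank_eq
    simp [Module.finrank_prod] at this
    omega
  let bP : Module.Basis (Fin s) ℤ (LinearMap.ker φ) := Module.finBasisOfFinrankEq ℤ _ hfr
  let b : Module.Basis (Fin s ⊕ Fin m) ℤ (Fin n → ℤ) := (bP.prod (Pi.basisFun ℤ (Fin m))).map e.symm
  let c : Module.Basis (Fin s ⊕ Fin m) ℤ (Fin n → ℤ) := (Pi.basisFun ℤ (Fin n)).reindex eq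
  have hle : (Submodule.span ℤ (Set.range u)).toAddSubgroup ≤ (LinearMap.ker φ).toAddSubgroup := by
    have : Submodule.span ℤ (Set.range u) ≤ LinearMap.ker φ := by
      rw [Submodule.span_le]; rintro _ ⟨i, rfl⟩; exact hk i
    exact this
  have hk' : ∀ i, u i ∈ LinearMap.ker φ := fun i => LinearMap.mem_ker.2 (hk i)
  have hsp : ∀ i, ((Module.Basis.span hu i : Submodule.span ℤ (Set.range u)) : Fin n → ℤ) = u i :=
    fun i => by rw [Module.Basis.span_apply]
  have h1 : (Submodule.span ℤ (Set.range u)).toAddSubgroup.relIndex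
      (LinearMap.ker φ).toAddSubgroup = (bP.det (fun i => ⟨u i, hk' i⟩)).natAbs :=
    (AddSubgroup.relIndex_eq_natAbs_det _ _ hle (Module.Basis.span hu) bP).trans
      (congrArg (fun w => (bP.det w).natAbs)
        (funext fun i => Subtype.ext (hsp i)))
  have h2 : (Matrix.of fun i j => Sum.elim u z (eq i) j).det = c.det (Sum.elim u z) := by
    rw [Module.Basis.det_apply, ← Matrix.det_transpose, ← Matrix.det_submatrix_equiv_self eq]
    congr 1
    ext i j
    simp [c, Module.Basis.toMatrix_apply]
  have h3 : (c.det (Sum.elim u z)).natAbs = (b.det (Sum.elim u z)).natAbs := by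
    rw [AlternatingMap.eq_smul_basis_det b c.det, AlternatingMap.smul_apply, smul_eq_mul,
      Int.natAbs_mul, Int.isUnit_iff_natAbs_eq.1 (Module.Basis.isUnit_det c b), one_mul]
  have h4 : b.toMatrix (Sum.elim u z) = Matrix.fromBlocks
      (bP.toMatrix (fun i => ⟨u i, hk' i⟩)) (bP.toMatrix (fun i => (e (z i)).1))
      0 (Matrix.of fun i j => φ (z i) j).transpose := by
    ext i j
    rcases i with i | i <;> rcases j with j | j <;>
      simp [b, Module.Basis.toMatrix_apply, e, hk]
    congr 2
    ext; simp [hk]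
  rw [h2, h3, h1, Module.Basis.det_apply, h4, Matrix.det_fromBlocks_zero₂₁, Matrix.det_transpose,
    Int.natAbs_mul, Module.Basis.det_apply]
/-- **(Elementary-divisors determinant identity, used in the proofs of Theorems 2.2 and
1.2 of Fr\o yshov.)** Let `u₁,…,uₛ ∈ ℤⁿ` be linearly independent (`s ≤ n`), let
`K = span(u₁,…,uₛ)`, `A = ℤⁿ/K`, `T ⊆ A` the torsion subgroup.  Then for any
`z₁,…,z_{n−s} ∈ ℤⁿ` and any isomorphism `θ : A/T ≃ ℤ^{n−s}`,
`|det(u₁,…,uₛ,z₁,…,z_{n−s})| = |T| ⬝ |det(θ(z̄₁),…,θ(z̄_{n−s}))|`. -/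
theorem det_rows_eq_torsion_card_mul_det (n s : ℕ) (hsn : s ≤ n)
    (u : Fin s → (Fin n → ℤ)) (hu : LinearIndependent ℤ u)
    (z : Fin (n - s) → (Fin n → ℤ))
    (θ : ((((Fin n → ℤ) ⧸ Submodule.span ℤ (Set.range u)) ⧸
        Submodule.torsion ℤ ((Fin n → ℤ) ⧸ Submodule.span ℤ (Set.range u)))) ≃+
      (Fin (n - s) → ℤ)) :
    (Matrix.of fun i j =>
        Fin.append u z (Fin.cast (by omega : n = s + (n - s)) i) j).det.natAbs =
      Nat.card (Submodule.torsion ℤ ((Fin n → ℤ) ⧸ Submodule.span ℤ (Set.range u))) *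
        (Matrix.of fun i j =>
          θ (Submodule.Quotient.mk (Submodule.Quotient.mk (z i))) j).det.natAbs := by
  let K := Submodule.span ℤ (Set.range u)
  let T := Submodule.torsion ℤ ((Fin n → ℤ) ⧸ K)
  let φ : (Fin n → ℤ) →ₗ[ℤ] (Fin (n - s) → ℤ) :=
    θ.toIntLinearEquiv.toLinearMap ∘ₗ T.mkQ ∘ₗ K.mkQ
  have hφ : Function.Surjective φ :=
    θ.surjective.comp ((Submodule.mkQ_surjective T).comp (Submodule.mkQ_surjective K))
  have hker : ∀ x, x ∈ LinearMap.ker φ ↔ K.mkQ x ∈ T := fun x => by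
    rw [LinearMap.mem_ker, ← Submodule.Quotient.mk_eq_zero T]
    exact map_eq_zero_iff θ θ.injective
  have hk : ∀ i, φ (u i) = 0 := fun i => by
    refine (hker _).2 ?_
    have : K.mkQ (u i) = 0 := by
      simpa using Submodule.subset_span (Set.mem_range_self i)
    rw [this]; exact T.zero_mem
  have key := aux_block ((finCongr (by omega : n = s + (n - s))).trans finSumFinEquiv.symm)
    φ hφ (by omega) u hu hk z
  have hcard : K.toAddSubgroup.relIndex (LinearMap.ker φ).toAddSubgroup = Nat.card T := by
    have h := AddSubgroup.relIndex_ker (LinearMap.ker φ).toAddSubgroup K.mkQ.toAddMonoidHom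
    have h1 : K.mkQ.toAddMonoidHom.ker = K.toAddSubgroup := by
      ext x; simp [AddMonoidHom.mem_ker]
    have h2 : (LinearMap.ker φ).toAddSubgroup.map K.mkQ.toAddMonoidHom = T.toAddSubgroup := by
      ext y
      obtain ⟨x, rfl⟩ := Submodule.mkQ_surjective K y
      constructor
      · rintro ⟨w, hw, hwx⟩
        have := (hker w).1 hw
        change K.mkQ w = K.mkQ x at hwx
        rw [hwx] at this
        exact this
      · intro hx
        exact ⟨x, (hker x).2 hx, rfl⟩
    rw [h1, h2] at h
    exact h
  rw [hcard] at key
  rw [← show (Matrix.of fun i j => φ (z i) j) = (Matrix.of fun i j =>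
          θ (Submodule.Quotient.mk (Submodule.Quotient.mk (z i))) j) from rfl, ← key]
  congr 2
  ext i j
  simp only [Matrix.of_apply, Equiv.trans_apply, finCongr_apply]
  generalize Fin.cast (by omega : n = s + (n - s)) i = k
  refine Fin.addCases (fun a => ?_) (fun a => ?_) k <;> simp
end

section
/- Let v be an element of the commutator subgroup of the free group Fₙ on n generators, and let ψ be a group homomorphism from Fₙ to the group Sp(1) of unit quaternions with ψ(v) = −1. Then the centralizer of the range of ψ in Sp(1) is {1, −1}; that is, every unit quaternion q satisfying q * ψ(w) = ψ(w) * q for all w ∈ Fₙ equals 1 or −1. -/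
noncomputable section

/-- `Sp(1)`, the group of unit quaternions. -/
abbrev Sp1 : Type := Metric.sphere (0 : Quaternion ℝ) 1

/-- Quaternions commuting with a given non-real quaternion commute with each other. -/
theorem quat_comm_of_comm (q a b : Quaternion ℝ)
    (hq : ¬ (q.imI = 0 ∧ q.imJ = 0 ∧ q.imK = 0))
    (ha : q * a = a * q) (hb : q * b = b * q) : a * b = b * a := by
  have key : ∀ x y : Quaternion ℝ, x * y = y * x ↔
      (x.imJ * y.imK = x.imK * y.imJ ∧ x.imK * y.imI = x.imI * y.imK ∧
        x.imI * y.imJ = x.imJ * y.imI) := by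
    intro x y
    rw [Quaternion.ext_iff]
    simp only [Quaternion.re_mul, Quaternion.imI_mul, Quaternion.imJ_mul, Quaternion.imK_mul]
    constructor
    · rintro ⟨h0, h1, h2, h3⟩
      refine ⟨?_, ?_, ?_⟩ <;> linarith
    · rintro ⟨h1, h2, h3⟩
      refine ⟨?_, ?_, ?_, ?_⟩ <;> linarith
  rw [key] at ha hb ⊢
  obtain ⟨a1, a2, a3⟩ := ha
  obtain ⟨b1, b2, b3⟩ := hb
  by_cases h1 : q.imI = 0
  · by_cases h2 : q.imJ = 0
    · have h3 : q.imK ≠ 0 := fun h => hq ⟨h1, h2, h⟩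
      refine ⟨?_, ?_, ?_⟩ <;> apply mul_left_cancel₀ h3 <;> grind
    · refine ⟨?_, ?_, ?_⟩ <;> apply mul_left_cancel₀ h2 <;> grind
  · refine ⟨?_, ?_, ?_⟩ <;> apply mul_left_cancel₀ h1 <;> grind

/-- **(Irreducibility of representations with `ψ(v) = -1`, Fr\o yshov.)** If `v` lies in
the commutator subgroup of `Fₙ` and `ψ : Fₙ →* Sp(1)` satisfies `ψ(v) = -1`, then the
centralizer of the range of `ψ` in `Sp(1)` is `{1, -1}`: every unit quaternion
commuting with all values of `ψ` is `1` or `-1`. -/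
theorem centralizer_of_rep_eq_pm_one (n : ℕ) (v : FreeGroup (Fin n))
    (hv : v ∈ commutator (FreeGroup (Fin n)))
    (ψ : FreeGroup (Fin n) →* Sp1)
    (hψv : ((ψ v : Quaternion ℝ)) = -1) :
    ∀ q : Sp1, (∀ w : FreeGroup (Fin n), q * ψ w = ψ w * q) →
      ((q : Quaternion ℝ) = 1 ∨ (q : Quaternion ℝ) = -1) := by
  intro q hq
  by_cases h : (q : Quaternion ℝ).imI = 0 ∧ (q : Quaternion ℝ).imJ = 0 ∧
      (q : Quaternion ℝ).imK = 0
  · obtain ⟨h1, h2, h3⟩ := h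
    have hn : Quaternion.normSq (q : Quaternion ℝ) = 1 := by
      rw [Quaternion.normSq_eq_norm_mul_self, norm_eq_of_mem_sphere q, mul_one]
    rw [Quaternion.normSq_def', h1, h2, h3] at hn
    have hr : (q : Quaternion ℝ).re ^ 2 = 1 := by linarith
    rcases (by simpa using hr : (q : Quaternion ℝ).re = 1 ∨ (q : Quaternion ℝ).re = -1) with hr | hr
    · left
      ext <;> simp [h1, h2, h3, hr, Quaternion.re_one, Quaternion.imI_one, Quaternion.imJ_one, Quaternion.imK_one]
    · right
      ext <;> simp [h1, h2, h3, hr, Quaternion.re_one, Quaternion.imI_one, Quaternion.imJ_one, Quaternion.imK_one]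
  · exfalso
    have hc : ∀ x y : FreeGroup (Fin n), ψ x * ψ y = ψ y * ψ x := by
      intro x y
      apply Subtype.ext
      exact quat_comm_of_comm q (ψ x) (ψ y) h
        (congrArg Subtype.val (hq x)) (congrArg Subtype.val (hq y))
    have hle : commutator (FreeGroup (Fin n)) ≤ ψ.ker := by
      rw [commutator_def, Subgroup.commutator_le]
      intro x _ y _
      rw [MonoidHom.mem_ker, map_commutatorElement, commutatorElement_eq_one_iff_mul_comm]
      exact hc x y
    have h1 : ψ v = 1 := hle hv
    rw [h1] at hψv
    have h2 := congrArg (fun z : Quaternion ℝ => z.re) hψv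
    norm_num [Quaternion.re_one] at h2
end
end

section
/- The unit quaternion group acts transitively by simultaneous conjugation on the set of pairs of unit quaternions with commutator −1: if g, h, g', h' ∈ ℍ = Quaternion ℝ are unit quaternions with g * h * g⁻¹ * h⁻¹ = −1 and g' * h' * g'⁻¹ * h'⁻¹ = −1, then there exists a unit quaternion x such that x * g * x⁻¹ = g' and x * h * x⁻¹ = h'. -/
theorem aux_re_comm (a b : Quaternion ℝ) : (a * b).re = (b * a).re := by
  simp only [Quaternion.re_mul]; ring

theorem aux_re_zero (a b : Quaternion ℝ) (hb : b ≠ 0) (h : a * b = -(b * a)) : a.re = 0 := by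
  have h1 : a = -(b * a * b⁻¹) := by
    rw [← neg_mul, ← h, mul_assoc, mul_inv_cancel₀ hb, mul_one]
  have h2 : (b * a * b⁻¹).re = a.re := by
    rw [aux_re_comm, ← mul_assoc, inv_mul_cancel₀ hb, one_mul]
  have h3 := congrArg (fun q : Quaternion ℝ => q.re) h1
  simp only [Quaternion.re_neg] at h3
  linarith

theorem aux_sq (a : Quaternion ℝ) (ha : ‖a‖ = 1) (h : a.re = 0) : a * a = -1 := by
  have h1 : Quaternion.normSq a = 1 := by rw [Quaternion.normSq_eq_norm_mul_self, ha, mul_one]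
  rw [Quaternion.normSq_def', h] at h1
  ext
  · rw [Quaternion.re_mul, Quaternion.re_neg, Quaternion.re_one, h]; linarith
  · rw [Quaternion.imI_mul, Quaternion.imI_neg, Quaternion.imI_one, h]; ring
  · rw [Quaternion.imJ_mul, Quaternion.imJ_neg, Quaternion.imJ_one, h]; ring
  · rw [Quaternion.imK_mul, Quaternion.imK_neg, Quaternion.imK_one, h]; ring

theorem aux_pair (g h : Quaternion ℝ) (hg : ‖g‖ = 1) (hh : ‖h‖ = 1)
    (hc : g * h * g⁻¹ * h⁻¹ = -1) :
    h * g = -(g * h) ∧ g * g = -1 ∧ h * h = -1 ∧ g.re = 0 ∧ h.re = 0 ∧ (g * h).re = 0 := by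
  have g0 : g ≠ 0 := by rintro rfl; simp at hg
  have h0 : h ≠ 0 := by rintro rfl; simp at hh
  have e : g * h = -(h * g) := by
    calc g * h = g * h * g⁻¹ * h⁻¹ * (h * g) := by
          rw [mul_assoc _ h⁻¹, inv_mul_cancel_left₀ h0, mul_assoc _ g⁻¹, inv_mul_cancel₀ g0, mul_one]
      _ = _ := by rw [hc, neg_one_mul]
  have e' : h * g = -(g * h) := by rw [e, neg_neg]
  have rg := aux_re_zero g h h0 e
  have rh := aux_re_zero h g g0 e'
  refine ⟨e', aux_sq g hg rg, aux_sq h hh rh, rg, rh, ?_⟩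
  have h3 := congrArg (fun q : Quaternion ℝ => q.re) e
  simp only [Quaternion.re_neg] at h3
  rw [aux_re_comm h g] at h3
  linarith

/-- Averaging over the quaternion group of order eight. -/
noncomputable def auxT (g h g' h' y : Quaternion ℝ) : Quaternion ℝ :=
  y - g' * y * g - h' * y * h - (g' * h') * y * (g * h)

theorem aux_ex (r a b c : ℝ) :
    ∃ q : Quaternion ℝ, q.re = r ∧ q.imI = a ∧ q.imJ = b ∧ q.imK = c :=
  ⟨⟨r, a, b, c⟩, rfl, rfl, rfl, rfl⟩

theorem aux_tr (a b i j k : Quaternion ℝ)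
    (hi : i.re = 0 ∧ i.imI = 1 ∧ i.imJ = 0 ∧ i.imK = 0)
    (hj : j.re = 0 ∧ j.imI = 0 ∧ j.imJ = 1 ∧ j.imK = 0)
    (hk : k.re = 0 ∧ k.imI = 0 ∧ k.imJ = 0 ∧ k.imK = 1) :
    (a * 1 * b).re + (a * i * b).imI + (a * j * b).imJ + (a * k * b).imK = 4 * a.re * b.re := by
  obtain ⟨i0, i1, i2, i3⟩ := hi
  obtain ⟨j0, j1, j2, j3⟩ := hj
  obtain ⟨k0, k1, k2, k3⟩ := hk
  simp only [mul_one, Quaternion.re_mul, Quaternion.imI_mul, Quaternion.imJ_mul,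
    Quaternion.imK_mul, i0, i1, i2, i3, j0, j1, j2, j3, k0, k1, k2, k3]
  ring

/-- **(Transitivity of conjugation on pairs with commutator `−1`.)** If `(g, h)` and
`(g', h')` are pairs of unit quaternions with `ghg⁻¹h⁻¹ = −1 = g'h'g'⁻¹h'⁻¹`, then there
is a unit quaternion `x` with `xgx⁻¹ = g'` and `xhx⁻¹ = h'`. -/
theorem conjugation_transitive_on_anticommuting_pairs
    (g h g' h' : Quaternion ℝ)
    (hg : ‖g‖ = 1) (hh : ‖h‖ = 1) (hg' : ‖g'‖ = 1) (hh' : ‖h'‖ = 1)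
    (hc : g * h * g⁻¹ * h⁻¹ = -1) (hc' : g' * h' * g'⁻¹ * h'⁻¹ = -1) :
    ∃ x : Quaternion ℝ, ‖x‖ = 1 ∧ x * g * x⁻¹ = g' ∧ x * h * x⁻¹ = h' := by
  obtain ⟨e, sg, sh, rg, rh, rgh⟩ := aux_pair g h hg hh hc
  obtain ⟨e', sg', sh', rg', rh', rgh'⟩ := aux_pair g' h' hg' hh' hc'
  have key : ∃ y, auxT g h g' h' y ≠ 0 := by
    by_contra! H
    obtain ⟨i, hi⟩ := aux_ex 0 1 0 0
    obtain ⟨j, hj⟩ := aux_ex 0 0 1 0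
    obtain ⟨k, hk⟩ := aux_ex 0 0 0 1
    have t1 := congrArg (fun q : Quaternion ℝ => q.re) (H 1)
    have t2 := congrArg (fun q : Quaternion ℝ => q.imI) (H i)
    have t3 := congrArg (fun q : Quaternion ℝ => q.imJ) (H j)
    have t4 := congrArg (fun q : Quaternion ℝ => q.imK) (H k)
    have a1 := aux_tr g' g i j k hi hj hk
    have a2 := aux_tr h' h i j k hi hj hk
    have a3 := aux_tr (g' * h') (g * h) i j k hi hj hk
    rw [rg] at a1
    rw [rh] at a2
    rw [rgh] at a3
    simp only [auxT, Quaternion.re_sub, Quaternion.imI_sub, Quaternion.imJ_sub,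
      Quaternion.imK_sub, Quaternion.re_one, Quaternion.re_zero, Quaternion.imI_zero,
      Quaternion.imJ_zero, Quaternion.imK_zero, hi.2.1, hj.2.2.1, hk.2.2.2] at t1 t2 t3 t4
    linarith
  obtain ⟨y, hy⟩ := key
  have sg2 : ∀ z, g' * (g' * z) = -z := fun z => by rw [← mul_assoc, sg', neg_one_mul]
  have sh2 : ∀ z, h' * (h' * z) = -z := fun z => by rw [← mul_assoc, sh', neg_one_mul]
  have e2 : ∀ z, h' * (g' * z) = -(g' * (h' * z)) := fun z => by
    rw [← mul_assoc, e', neg_mul, mul_assoc]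
  have f1 : g * (g * h) = -h := by rw [← mul_assoc, sg, neg_one_mul]
  have k1 : auxT g h g' h' y * g = g' * auxT g h g' h' y := by
    simp only [auxT, sub_mul, mul_sub, mul_assoc, sg2, f1, sg, e, mul_neg, neg_neg, mul_one]
    abel
  have k2 : auxT g h g' h' y * h = h' * auxT g h g' h' y := by
    simp only [auxT, sub_mul, mul_sub, mul_assoc, sh2, e2, sh, mul_neg, mul_one]
    abel
  generalize auxT g h g' h' y = x at *
  have hn : ‖x‖ ≠ 0 := norm_ne_zero_iff.mpr hy
  have hx : ‖x‖⁻¹ • x ≠ 0 := smul_ne_zero (inv_ne_zero hn) hy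
  refine ⟨‖x‖⁻¹ • x, by rw [norm_smul, norm_inv, norm_norm, inv_mul_cancel₀ hn], ?_, ?_⟩
  · rw [mul_inv_eq_iff_eq_mul₀ hx, smul_mul_assoc, mul_smul_comm, k1]
  · rw [mul_inv_eq_iff_eq_mul₀ hx, smul_mul_assoc, mul_smul_comm, k2]
end
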